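/- Assume 𝒞 is compact with R = sup{Tr(X) : X ∈ 𝒞} < ∞. Let Y ∈ ℳ_p, let μ ∈ ℝ^m and S = C − 𝒜*(μ), and assume 2 S Y ∈ T_Yℳ_p (so that 2 S Y is the Riemannian gradient of f at Y). Let Ỹ = [Y | 0] ∈ ℝ^{n×(p+1)} be Y padded with one zero column; then Ỹ ∈ ℳ_{p+1}. Let λ = inf{2⟨Ż, S Ż⟩ : Ż ∈ T_Ỹℳ_{p+1}, ‖Ż‖ = 1} (the smallest eigenvalue of the Riemannian Hessian of f at Ỹ). Then the optimality gap at Y is bounded by 0 ≤ 2(Tr(C Y Yᵀ) − f*) ≤ √R · ‖2 S Y‖ − R · min(λ, 0). -/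

import Mathlib

open Matrix MeasureTheory

noncomputable section

/-- Frobenius inner product `⟨A, B⟩ = Tr(Aᵀ B)`. -/
def frobInner {n p : ℕ} (A B : Matrix (Fin n) (Fin p) ℝ) : ℝ := (Aᵀ * B).trace

/-- Frobenius norm. -/
def frobNorm {n p : ℕ} (A : Matrix (Fin n) (Fin p) ℝ) : ℝ := Real.sqrt (frobInner A A)

/-- The constraint map 𝒜, `𝒜(X) i = Tr(A i * X)`. -/
def Aop {n m : ℕ} (A : Fin m → Matrix (Fin n) (Fin n) ℝ) (X : Matrix (Fin n) (Fin n) ℝ) :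
    Fin m → ℝ := fun i => (A i * X).trace

/-- The adjoint 𝒜*, `𝒜*(μ) = ∑ i, μ i • A i`. -/
def Aadj {n m : ℕ} (A : Fin m → Matrix (Fin n) (Fin n) ℝ) (μ : Fin m → ℝ) :
    Matrix (Fin n) (Fin n) ℝ := ∑ i, μ i • A i

/-- The SDP feasible set 𝒞. -/
def sdpFeas {n m : ℕ} (A : Fin m → Matrix (Fin n) (Fin n) ℝ) (b : Fin m → ℝ) :
    Set (Matrix (Fin n) (Fin n) ℝ) := {X | X.IsSymm ∧ Aop A X = b ∧ X.PosSemidef}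

/-- Optimal value `f* = inf {Tr(C X) : X ∈ 𝒞}` of the SDP. -/
def fstar {n m : ℕ} (A : Fin m → Matrix (Fin n) (Fin n) ℝ) (b : Fin m → ℝ)
    (C : Matrix (Fin n) (Fin n) ℝ) : ℝ := sInf ((fun X => (C * X).trace) '' sdpFeas A b)

/-- The factorized feasible set `ℳ_p = {Y : 𝒜(Y Yᵀ) = b}`. -/
def facFeas {n m : ℕ} (A : Fin m → Matrix (Fin n) (Fin n) ℝ) (b : Fin m → ℝ) (p : ℕ) :
    Set (Matrix (Fin n) (Fin p) ℝ) := {Y | Aop A (Y * Yᵀ) = b}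

/-- Tangent space `T_Yℳ = {Ydot : 𝒜(Ydot Yᵀ + Y Ydotᵀ) = 0}`. -/
def tangentSet {n m p : ℕ} (A : Fin m → Matrix (Fin n) (Fin n) ℝ)
    (Y : Matrix (Fin n) (Fin p) ℝ) : Set (Matrix (Fin n) (Fin p) ℝ) :=
  {Ydot | Aop A (Ydot * Yᵀ + Y * Ydotᵀ) = 0}

/-- Second-order critical point of the factorized problem. -/
def IsSOCP {n m p : ℕ} (A : Fin m → Matrix (Fin n) (Fin n) ℝ) (b : Fin m → ℝ)
    (C : Matrix (Fin n) (Fin n) ℝ) (Y : Matrix (Fin n) (Fin p) ℝ) : Prop :=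
  Y ∈ facFeas A b p ∧ ∃ μ : Fin m → ℝ,
    (C - Aadj A μ) * Y = 0 ∧
    ∀ Ydot ∈ tangentSet A Y, 0 ≤ frobInner Ydot ((C - Aadj A μ) * Ydot)

/-- The real vector space of symmetric `n × n` matrices. -/
def symmSpace (n : ℕ) : Submodule ℝ (Matrix (Fin n) (Fin n) ℝ) where
  carrier := {X | X.IsSymm}
  add_mem' := fun ha hb => ha.add hb
  zero_mem' := Matrix.isSymm_zero
  smul_mem' := fun c X hX => by
    show (c • X)ᵀ = c • X
    rw [Matrix.transpose_smul, hX]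

instance (n : ℕ) : MeasurableSpace ↥(symmSpace n) := borel _

/-- A set of symmetric matrices is null if it has measure zero for every additive Haar
measure on the finite-dimensional real vector space of symmetric `n × n` matrices. -/
def IsNullSymmSet (n : ℕ) (S : Set (Matrix (Fin n) (Fin n) ℝ)) : Prop :=
  ∀ μ : Measure ↥(symmSpace n), μ.IsAddHaarMeasure →
    μ {C : ↥(symmSpace n) | (C : Matrix (Fin n) (Fin n) ℝ) ∈ S} = 0

/-!
By the dual certificate `S = C - 𝒜*(μ)`, every `X ∈ 𝒞` satisfies
`Tr(C Y Yᵀ) - Tr(C X) = Tr(S Y Yᵀ) - Tr(S X)`. The first trace is `⟨Y, S Y⟩`, which Cauchy–Schwarz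
bounds in terms of `‖Y‖² = Tr(Y Yᵀ) ≤ R`. For the second, let `w ≠ 0` lie in the kernel of `Ỹ`: then
`v wᵀ` is tangent at `Ỹ` for every vector `v`, because `v wᵀ Ỹᵀ = v (Ỹ w)ᵀ = 0`, and its Rayleigh
quotient is that of `v` for `2 S`. Hence `λ` bounds the quadratic form of `2 S` from below on the
whole of `ℝⁿ`, and writing `X` as a sum of matrices `v vᵀ` gives `λ Tr X ≤ 2 Tr(S X)`.
-/

section Frobenius

variable {n p : ℕ}

open scoped Matrix.Norms.Frobenius in
lemma frobNorm_eq_norm (A : Matrix (Fin n) (Fin p) ℝ) : frobNorm A = ‖A‖ := by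
  rw [frobNorm, frobInner, ← vec_dotProduct_vec, frobenius_norm_def, Real.sqrt_eq_rpow,
    dotProduct, Fintype.sum_prod_type_right]
  simp [vec, pow_two]

lemma frobNorm_mul_le {m : ℕ} (A : Matrix (Fin n) (Fin m) ℝ) (B : Matrix (Fin m) (Fin p) ℝ) :
    frobNorm (A * B) ≤ frobNorm A * frobNorm B := by
  simpa only [frobNorm_eq_norm] using frobenius_norm_mul A B

lemma frobNorm_eq_sqrt_trace_mul_transpose (A : Matrix (Fin n) (Fin p) ℝ) :
    frobNorm A = √(A * Aᵀ).trace := by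
  rw [frobNorm, frobInner, trace_mul_comm]

lemma frobInner_eq_inner (A B : Matrix (Fin n) (Fin p) ℝ) :
    frobInner A B = inner ℝ (WithLp.toLp 2 A.vec) (WithLp.toLp 2 B.vec) := by
  rw [frobInner, ← vec_dotProduct_vec, EuclideanSpace.inner_toLp_toLp, star_trivial,
    dotProduct_comm]

lemma abs_frobInner_le (A B : Matrix (Fin n) (Fin p) ℝ) :
    |frobInner A B| ≤ frobNorm A * frobNorm B := by
  simpa only [frobNorm, frobInner_eq_inner, norm_eq_sqrt_real_inner] using
    abs_real_inner_le_norm (WithLp.toLp 2 A.vec) (WithLp.toLp 2 B.vec)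

lemma frobInner_smul_smul (c : ℝ) (A B : Matrix (Fin n) (Fin p) ℝ) :
    frobInner (c • A) (c • B) = c ^ 2 * frobInner A B := by
  simp [frobInner, pow_two, mul_assoc]

lemma frobInner_vecMulVec (a c : Fin n → ℝ) (b d : Fin p → ℝ) :
    frobInner (vecMulVec a b) (vecMulVec c d) = (a ⬝ᵥ c) * (b ⬝ᵥ d) := by
  rw [frobInner, transpose_vecMulVec, vecMulVec_mul_vecMulVec, vecMulVec_smul, trace_smul,
    trace_vecMulVec, smul_eq_mul]

end Frobenius

section Constraints

variable {n m p : ℕ} {A : Fin m → Matrix (Fin n) (Fin n) ℝ}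

lemma trace_Aadj_mul (A : Fin m → Matrix (Fin n) (Fin n) ℝ) (μ : Fin m → ℝ)
    (X : Matrix (Fin n) (Fin n) ℝ) : (Aadj A μ * X).trace = μ ⬝ᵥ Aop A X := by
  simp [Aadj, Aop, dotProduct, Finset.sum_mul, trace_sum]

lemma trace_mul_sub_trace_mul_of_Aop_eq {X X' : Matrix (Fin n) (Fin n) ℝ}
    (h : Aop A X = Aop A X') (C : Matrix (Fin n) (Fin n) ℝ) (μ : Fin m → ℝ) :
    (C * X).trace - (C * X').trace =
      ((C - Aadj A μ) * X).trace - ((C - Aadj A μ) * X').trace := by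
  simp only [Matrix.sub_mul, trace_sub, trace_Aadj_mul, h]
  ring

lemma mul_transpose_mem_sdpFeas {b : Fin m → ℝ} {Y : Matrix (Fin n) (Fin p) ℝ}
    (hY : Y ∈ facFeas A b p) : Y * Yᵀ ∈ sdpFeas A b :=
  ⟨by rw [IsSymm, transpose_mul, transpose_transpose], hY,
    by simpa only [conjTranspose_eq_transpose_of_trivial] using
      posSemidef_self_mul_conjTranspose Y⟩

lemma smul_mem_tangentSet {Y Z : Matrix (Fin n) (Fin p) ℝ} (hZ : Z ∈ tangentSet A Y)
    (c : ℝ) : c • Z ∈ tangentSet A Y := by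
  have hsmul (X : Matrix (Fin n) (Fin n) ℝ) : Aop A (c • X) = c • Aop A X := by
    ext i
    simp [Aop]
  have hZ : Aop A (Z * Yᵀ + Y * Zᵀ) = 0 := hZ
  change Aop A (c • Z * Yᵀ + Y * (c • Z)ᵀ) = 0
  rw [transpose_smul, Matrix.smul_mul, Matrix.mul_smul, ← smul_add, hsmul, hZ, smul_zero]

lemma vecMulVec_mem_tangentSet (A : Fin m → Matrix (Fin n) (Fin n) ℝ)
    {Y : Matrix (Fin n) (Fin p) ℝ} {w : Fin p → ℝ} (hw : Y *ᵥ w = 0) (v : Fin n → ℝ) :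
    vecMulVec v w ∈ tangentSet A Y := by
  change Aop A (vecMulVec v w * Yᵀ + Y * (vecMulVec v w)ᵀ) = 0
  rw [transpose_vecMulVec, vecMulVec_mul, mul_vecMulVec, vecMul_transpose, hw]
  ext i
  simp [Aop]

/-- The values of the quadratic form `Z ↦ 2 ⟨Z, S Z⟩` on the unit sphere of `T_Yℳ`. For the
multiplier matrix `S` these are the Rayleigh quotients of the Riemannian Hessian at `Y`, so that
their infimum is its smallest eigenvalue. -/
def hessianRayleighSet (A : Fin m → Matrix (Fin n) (Fin n) ℝ)
    (S : Matrix (Fin n) (Fin n) ℝ) (Y : Matrix (Fin n) (Fin p) ℝ) : Set ℝ :=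
  {t | ∃ Z ∈ tangentSet A Y, frobNorm Z = 1 ∧ t = 2 * frobInner Z (S * Z)}

variable {S : Matrix (Fin n) (Fin n) ℝ} {Y : Matrix (Fin n) (Fin p) ℝ}

lemma bddBelow_hessianRayleighSet : BddBelow (hessianRayleighSet A S Y) := by
  refine ⟨-(2 * frobNorm S), ?_⟩
  rintro _ ⟨Z, -, hZ, rfl⟩
  have h : |frobInner Z (S * Z)| ≤ frobNorm S := calc
    |frobInner Z (S * Z)| ≤ frobNorm Z * frobNorm (S * Z) := abs_frobInner_le _ _
    _ ≤ frobNorm Z * (frobNorm S * frobNorm Z) :=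
      mul_le_mul_of_nonneg_left (frobNorm_mul_le S Z) (Real.sqrt_nonneg _)
    _ = frobNorm S := by rw [hZ, one_mul, mul_one]
  linarith [neg_le_of_abs_le h]

lemma sInf_hessianRayleighSet_mul_le {Z : Matrix (Fin n) (Fin p) ℝ} (hZ : Z ∈ tangentSet A Y)
    (hZ₀ : 0 < frobInner Z Z) :
    sInf (hessianRayleighSet A S Y) * frobInner Z Z ≤ 2 * frobInner Z (S * Z) := by
  set c : ℝ := (frobNorm Z)⁻¹
  have hc : c ^ 2 = (frobInner Z Z)⁻¹ := by rw [inv_pow, frobNorm, Real.sq_sqrt hZ₀.le]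
  have hunit : frobNorm (c • Z) = 1 := by
    rw [frobNorm, frobInner_smul_smul, hc, inv_mul_cancel₀ hZ₀.ne', Real.sqrt_one]
  have hle : sInf (hessianRayleighSet A S Y) ≤ 2 * frobInner (c • Z) (S * (c • Z)) :=
    csInf_le bddBelow_hessianRayleighSet ⟨_, smul_mem_tangentSet hZ c, hunit, rfl⟩
  rw [Matrix.mul_smul, frobInner_smul_smul, hc, mul_left_comm, ← div_eq_inv_mul] at hle
  exact (le_div_iff₀ hZ₀).mp hle

lemma sInf_hessianRayleighSet_mul_dotProduct_le {w : Fin p → ℝ} (hw₀ : w ≠ 0)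
    (hw : Y *ᵥ w = 0) (v : Fin n → ℝ) :
    sInf (hessianRayleighSet A S Y) * (v ⬝ᵥ v) ≤ 2 * (v ⬝ᵥ S *ᵥ v) := by
  obtain rfl | hv₀ := eq_or_ne v 0
  · simp
  have hvv : 0 < v ⬝ᵥ v := by simpa using dotProduct_star_self_pos_iff.mpr hv₀
  have hww : 0 < w ⬝ᵥ w := by simpa using dotProduct_star_self_pos_iff.mpr hw₀
  have h := sInf_hessianRayleighSet_mul_le (S := S) (vecMulVec_mem_tangentSet A hw v)
    (by rw [frobInner_vecMulVec]; positivity)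
  rw [mul_vecMulVec, frobInner_vecMulVec, frobInner_vecMulVec, ← mul_assoc, ← mul_assoc] at h
  exact le_of_mul_le_mul_right h hww

end Constraints

lemma mul_trace_le_trace_mul_of_posSemidef {ι : Type*} [Fintype ι] {M X : Matrix ι ι ℝ} {c : ℝ}
    (hM : ∀ v : ι → ℝ, c * (v ⬝ᵥ v) ≤ v ⬝ᵥ M *ᵥ v) (hX : X.PosSemidef) :
    c * X.trace ≤ (M * X).trace := by
  obtain ⟨k, v, rfl⟩ := posSemidef_iff_eq_sum_vecMulVec.mp hX
  simp only [trace_sum, mul_vecMulVec, trace_vecMulVec, star_trivial,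
    Finset.mul_sum]
  exact Finset.sum_le_sum fun i _ => dotProduct_comm (v i) (M *ᵥ v i) ▸ hM (v i)

lemma mul_min_zero_le_two_mul_trace_mul {ι : Type*} [Fintype ι] {M X : Matrix ι ι ℝ} {c R : ℝ}
    (hM : ∀ v : ι → ℝ, c * (v ⬝ᵥ v) ≤ 2 * (v ⬝ᵥ M *ᵥ v)) (hX : X.PosSemidef)
    (hR : X.trace ≤ R) : R * min c 0 ≤ 2 * (M * X).trace := by
  have hM' (v : ι → ℝ) : c * (v ⬝ᵥ v) ≤ v ⬝ᵥ ((2 : ℝ) • M) *ᵥ v := by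
    simpa [smul_mulVec] using hM v
  calc R * min c 0 ≤ X.trace * min c 0 := mul_le_mul_of_nonpos_right hR (min_le_right c 0)
    _ ≤ X.trace * c := mul_le_mul_of_nonneg_left (min_le_left c 0) hX.trace_nonneg
    _ = c * X.trace := mul_comm _ _
    _ ≤ ((2 : ℝ) • M * X).trace := mul_trace_le_trace_mul_of_posSemidef hM' hX
    _ = 2 * (M * X).trace := by rw [Matrix.smul_mul, trace_smul, smul_eq_mul]

lemma two_mul_trace_mul_mul_transpose_le {n p : ℕ} (S : Matrix (Fin n) (Fin n) ℝ)
    {Y : Matrix (Fin n) (Fin p) ℝ} {R : ℝ} (hR : (Y * Yᵀ).trace ≤ R) :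
    2 * (S * (Y * Yᵀ)).trace ≤ √R * frobNorm ((2 : ℝ) • (S * Y)) := calc
  2 * (S * (Y * Yᵀ)).trace = frobInner Y ((2 : ℝ) • (S * Y)) := by
    rw [frobInner, Matrix.mul_smul, trace_smul, smul_eq_mul, ← Matrix.mul_assoc, trace_mul_comm]
  _ ≤ frobNorm Y * frobNorm ((2 : ℝ) • (S * Y)) := le_of_abs_le (abs_frobInner_le _ _)
  _ ≤ √R * frobNorm ((2 : ℝ) • (S * Y)) := by
    rw [frobNorm_eq_sqrt_trace_mul_transpose Y]
    exact mul_le_mul_of_nonneg_right (Real.sqrt_le_sqrt hR) (Real.sqrt_nonneg _)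

lemma snoc_zero_mul_transpose {ι : Type*} {p : ℕ} (Y : Matrix ι (Fin p) ℝ) :
    (of fun i => Fin.snoc (Y i) 0 : Matrix ι (Fin (p + 1)) ℝ) *
      (of fun i => Fin.snoc (Y i) 0 : Matrix ι (Fin (p + 1)) ℝ)ᵀ = Y * Yᵀ := by
  ext i j
  simp [mul_apply, Fin.sum_univ_castSucc]

lemma snoc_zero_mulVec_single_last {ι : Type*} {p : ℕ} (Y : Matrix ι (Fin p) ℝ) :
    (of fun i => Fin.snoc (Y i) 0 : Matrix ι (Fin (p + 1)) ℝ) *ᵥ Pi.single (Fin.last p) 1 = 0 := by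
  ext i
  simp

theorem optimality_gap_via_padded_point_general {n m p q : ℕ}
    (A : Fin m → Matrix (Fin n) (Fin n) ℝ) (b : Fin m → ℝ) (C : Matrix (Fin n) (Fin n) ℝ)
    (hbdd : BddAbove (trace '' sdpFeas A b)) (R : ℝ) (hR : R = sSup (trace '' sdpFeas A b))
    (Y : Matrix (Fin n) (Fin p) ℝ) (hY : Y ∈ facFeas A b p)
    (μ : Fin m → ℝ) (S : Matrix (Fin n) (Fin n) ℝ) (hS : S = C - Aadj A μ)
    (Ytil : Matrix (Fin n) (Fin q) ℝ) (hYtil : Ytil * Ytilᵀ = Y * Yᵀ)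
    (hker : ∃ w ≠ 0, Ytil *ᵥ w = 0)
    (lam : ℝ) (hlam : lam = sInf (hessianRayleighSet A S Ytil)) :
    Ytil ∈ facFeas A b q ∧
    0 ≤ 2 * ((C * (Y * Yᵀ)).trace - fstar A b C) ∧
    2 * ((C * (Y * Yᵀ)).trace - fstar A b C) ≤
      √R * frobNorm ((2 : ℝ) • (S * Y)) - R * min lam 0 := by
  obtain ⟨w, hw₀, hw⟩ := hker
  have hYY : Y * Yᵀ ∈ sdpFeas A b := mul_transpose_mem_sdpFeas hY
  have htrace {X} (hX : X ∈ sdpFeas A b) : X.trace ≤ R := hR ▸ le_csSup hbdd ⟨X, hX, rfl⟩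
  have hform (v : Fin n → ℝ) : lam * (v ⬝ᵥ v) ≤ 2 * (v ⬝ᵥ S *ᵥ v) :=
    hlam ▸ sInf_hessianRayleighSet_mul_dotProduct_le hw₀ hw v
  have hcost : ∀ t ∈ (fun X => (C * X).trace) '' sdpFeas A b, (C * (Y * Yᵀ)).trace -
      (√R * frobNorm ((2 : ℝ) • (S * Y)) - R * min lam 0) / 2 ≤ t := by
    rintro _ ⟨X, hX, rfl⟩
    have hdual := trace_mul_sub_trace_mul_of_Aop_eq (hYY.2.1.trans hX.2.1.symm) C μ
    rw [← hS] at hdual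
    linarith [two_mul_trace_mul_mul_transpose_le S (htrace hYY),
      mul_min_zero_le_two_mul_trace_mul hform hX.2.2 (htrace hX)]
  have hupper : fstar A b C ≤ (C * (Y * Yᵀ)).trace := csInf_le ⟨_, hcost⟩ ⟨_, hYY, rfl⟩
  have hlower : (C * (Y * Yᵀ)).trace -
      (√R * frobNorm ((2 : ℝ) • (S * Y)) - R * min lam 0) / 2 ≤ fstar A b C :=
    le_csInf ⟨_, _, hYY, rfl⟩ hcost
  exact ⟨(congrArg (Aop A) hYtil).trans hY, by linarith, by linarith⟩

/-- a posteriori optimality gap bound via the padded point `Ỹ = [Y | 0]`: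
`0 ≤ 2(f(Y) − f*) ≤ √R ‖2SY‖ − R min(λ, 0)` where `λ` is the smallest Rayleigh quotient
of the Riemannian Hessian at `Ỹ`. -/
theorem optimality_gap_via_padded_point
    (n m p : ℕ) (hn : 0 < n) (hm : 0 < m) (hp : 0 < p)
    (A : Fin m → Matrix (Fin n) (Fin n) ℝ) (hA : ∀ i, (A i).IsSymm) (b : Fin m → ℝ)
    (C : Matrix (Fin n) (Fin n) ℝ) (hC : C.IsSymm)
    (hcompact : IsCompact (sdpFeas A b))
    (R : ℝ) (hR : R = sSup (Matrix.trace '' sdpFeas A b))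
    (Y : Matrix (Fin n) (Fin p) ℝ) (hY : Y ∈ facFeas A b p)
    (μ : Fin m → ℝ) (S : Matrix (Fin n) (Fin n) ℝ) (hS : S = C - Aadj A μ)
    (htan : (2 : ℝ) • (S * Y) ∈ tangentSet A Y)
    (Ytil : Matrix (Fin n) (Fin (p + 1)) ℝ)
    (hYtil : Ytil = Matrix.of fun i => Fin.snoc (Y i) (0 : ℝ))
    (lam : ℝ)
    (hlam : lam = sInf {t : ℝ | ∃ Zdot ∈ tangentSet A Ytil,
      frobNorm Zdot = 1 ∧ t = 2 * frobInner Zdot (S * Zdot)}) :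
    Ytil ∈ facFeas A b (p + 1) ∧
    0 ≤ 2 * ((C * (Y * Yᵀ)).trace - fstar A b C) ∧
    2 * ((C * (Y * Yᵀ)).trace - fstar A b C) ≤
      Real.sqrt R * frobNorm ((2 : ℝ) • (S * Y)) - R * min lam 0 := by
  subst hYtil
  exact optimality_gap_via_padded_point_general A b C
    (hcompact.bddAbove_image (by fun_prop)) R hR Y hY μ S hS _ (snoc_zero_mul_transpose Y)
    ⟨_, by simp, snoc_zero_mulVec_single_last Y⟩ lam hlam

end
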